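/- (Oracle inequality for Gaussian linear policies under uniform logging) Assume the logging policy is uniform: π0(a|x) = 1/K for all (x,a). Let φ : X → R^d be a measurable feature map and, for θ = (θ_a)_{a∈A} ∈ R^{dK}, let h_θ(x) = argmax_{a∈A} φ(x)ᵀθ_a (with a fixed measurable tie-breaking rule). Let the prior be P = N(μ0, I_{dK}) and consider posteriors Q_μ = N(μ, I_{dK}), μ ∈ R^{dK}, with induced policies π_{Q_μ}(a|x) = Q_μ({θ : h_θ(x) = a}). Let n ≥ 1, δ ∈ (0,1), α ∈ [0,1], λ = 1/√n. Suppose μ̂ minimizes μ ↦ R̂_n^α(π_{Q_μ}) + √(KL1(π_{Q_μ})/(2n)) + B_n^α(π_{Q_μ}) + KL2(π_{Q_μ})/(nλ) + (λ/2)V̄_n^α(π_{Q_μ}) and μ_* minimizes μ ↦ R(π_{Q_μ}). Then with probability at least 1−δ over draws of D_n: R(π_{Q_{μ̂}}) ≤ R(π_{Q_{μ_*}}) + √(‖μ_*−μ0‖² + 2·log(4√n/δ))/√n + 2(1 − K^{α−1}) + (‖μ_*−μ0‖² + 2·log(4/δ))/√n + (K^{2α−1} + K^{2α})/√n. -/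

import Mathlib

open MeasureTheory ProbabilityTheory Real

open Classical in
/-- Kullback–Leibler divergence between two measures, valued in `ℝ≥0∞` (junk value `⊤` when
`Q` is not absolutely continuous w.r.t. `P` or the log-likelihood ratio is not integrable). -/
noncomputable def klDiv {α : Type*} [MeasurableSpace α] (Q P : Measure α) : ENNReal :=
  if Q ≪ P ∧ Integrable (llr Q P) Q then ENNReal.ofReal (∫ x, llr Q P x ∂Q) else ⊤

/-!
The weighted cost `K ^ α * c` of a logged pair, counted only when a hypothesis `θ` chooses the
logged action, has `Q`-average equal to the summand of `R̂ₙ^α(π_Q)`. For bounded `x`, the inequality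
`exp (x - x² / 2) ≤ 1 + x + x² / 2` gives an exponential moment that is at most one, where the
correction involves the empirical and the true second moments. Averaging over `θ ∼ P`, Markov's
inequality and the Donsker–Varadhan change of measure turn this into a deviation bound that holds
for all posteriors at once; applied to `λ` and `-λ` times the weighted cost, it is two-sided.

Under uniform logging the mean of the estimate is `K ^ (α - 1) * R(π_Q)`, so the bias is at most
`Bₙ^α = 1 - K ^ (α - 1)`, which does not depend on `Q`, and the second moments are at most
`K ^ (2 * α - 1)` and `K ^ (2 * α)`. The bound is used at the learned posterior and at the optimal
one, whose divergence from the prior is `‖μ_* - μ0‖² / 2`.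
-/

theorem exp_sub_half_sq_le (x : ℝ) : exp (x - x ^ 2 / 2) ≤ 1 + x + x ^ 2 / 2 := by
  rcases le_total 0 x with hx | hx
  · have hle : x - x ^ 2 / 2 ≤ log (1 + x) := by
      refine le_trans ?_ (le_log_one_add_of_nonneg hx)
      rw [le_div_iff₀ (by linarith)]
      nlinarith [pow_nonneg hx 3]
    calc exp (x - x ^ 2 / 2) ≤ exp (log (1 + x)) := exp_le_exp.2 hle
      _ = 1 + x := exp_log (by linarith)
      _ ≤ 1 + x + x ^ 2 / 2 := by linarith [sq_nonneg x]
  · have hpos : 0 < 1 + x + x ^ 2 / 2 := by nlinarith [sq_nonneg (x + 1)]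
    have hneg : 1 - x + x ^ 2 / 2 ≤ exp (-x) := by
      simpa [sub_eq_add_neg] using quadratic_le_exp_of_nonneg (neg_nonneg.2 hx)
    -- `(1 + x + x²/2) (1 - x + x²/2) = 1 + x⁴/4`
    have hone : 1 ≤ (1 + x + x ^ 2 / 2) * exp (-x) :=
      calc 1 ≤ (1 + x + x ^ 2 / 2) * (1 - x + x ^ 2 / 2) := by nlinarith [sq_nonneg (x ^ 2)]
        _ ≤ (1 + x + x ^ 2 / 2) * exp (-x) := by gcongr
    calc exp (x - x ^ 2 / 2) ≤ exp x := exp_le_exp.2 (by linarith [sq_nonneg x])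
      _ ≤ exp x * ((1 + x + x ^ 2 / 2) * exp (-x)) := le_mul_of_one_le_right (exp_pos x).le hone
      _ = 1 + x + x ^ 2 / 2 := by
        rw [mul_left_comm, ← exp_add, add_neg_cancel, exp_zero, mul_one]

section ProductMeasures

variable {ι : Type*} [Fintype ι] {E : ι → Type*} [∀ i, MeasurableSpace (E i)]
  {μ ν : ∀ i, Measure (E i)} [∀ i, IsProbabilityMeasure (μ i)]

theorem lintegral_pi_prod_eq_prod_lintegral {f : ∀ i, E i → ENNReal} (hf : ∀ i, Measurable (f i)) :
    ∫⁻ x, ∏ i, f i (x i) ∂Measure.pi μ = ∏ i, ∫⁻ x, f i x ∂μ i := by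
  have hindep : iIndepFun (fun i (x : ∀ i, E i) => f i (x i)) (Measure.pi μ) :=
    iIndepFun_pi fun i => (hf i).aemeasurable
  refine (lintegral_prod_eq_prod_lintegral_of_indepFun Finset.univ _ hindep fun i =>
    (hf i).comp (measurable_pi_apply i)).trans ?_
  exact Finset.prod_congr rfl fun i _ => (measurePreserving_eval μ i).lintegral_comp (hf i)

theorem pi_withDensity {f : ∀ i, E i → ENNReal} (hf : ∀ i, Measurable (f i))
    [∀ i, SigmaFinite ((μ i).withDensity (f i))] :
    Measure.pi (fun i => (μ i).withDensity (f i)) =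
      (Measure.pi μ).withDensity fun x => ∏ i, f i (x i) := by
  refine Measure.pi_eq fun s hs => ?_
  have hprod (x : ∀ i, E i) : (Set.univ.pi s).indicator (fun x => ∏ i, f i (x i)) x =
      ∏ i, (s i).indicator (f i) (x i) := by
    classical
    have hone (i : ι) : (s i).indicator (f i) (x i) = (s i).indicator 1 (x i) * f i (x i) := by
      simp [Set.indicator_apply]
    rw [Finset.prod_congr rfl fun i _ => hone i, Finset.prod_mul_distrib,
      ← Set.indicator_pi_one_apply]
    simp [Set.indicator_apply]
  rw [withDensity_apply _ (.univ_pi hs), ← lintegral_indicator (.univ_pi hs)]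
  simp only [hprod]
  rw [lintegral_pi_prod_eq_prod_lintegral fun i => (hf i).indicator (hs i)]
  refine Finset.prod_congr rfl fun i _ => ?_
  rw [lintegral_indicator (hs i), withDensity_apply _ (hs i)]

variable [∀ i, IsProbabilityMeasure (ν i)]

theorem pi_eq_withDensity_prod_rnDeriv (h : ∀ i, μ i ≪ ν i) :
    Measure.pi μ = (Measure.pi ν).withDensity fun x => ∏ i, (μ i).rnDeriv (ν i) (x i) := by
  have hμ (i : ι) : μ i = (ν i).withDensity ((μ i).rnDeriv (ν i)) :=
    (Measure.withDensity_rnDeriv_eq _ _ (h i)).symm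
  have (i : ι) : SigmaFinite ((ν i).withDensity ((μ i).rnDeriv (ν i))) := hμ i ▸ inferInstance
  rw [← pi_withDensity fun i => Measure.measurable_rnDeriv (μ i) (ν i)]
  exact congrArg Measure.pi (funext hμ)

theorem pi_absolutelyContinuous (h : ∀ i, μ i ≪ ν i) : Measure.pi μ ≪ Measure.pi ν := by
  rw [pi_eq_withDensity_prod_rnDeriv h]
  exact withDensity_absolutelyContinuous _ _

theorem rnDeriv_pi (h : ∀ i, μ i ≪ ν i) :
    (Measure.pi μ).rnDeriv (Measure.pi ν) =ᵐ[Measure.pi ν]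
      fun x => ∏ i, (μ i).rnDeriv (ν i) (x i) := by
  rw [pi_eq_withDensity_prod_rnDeriv h]
  exact Measure.rnDeriv_withDensity _ (by fun_prop)

theorem llr_pi (h : ∀ i, μ i ≪ ν i) :
    llr (Measure.pi μ) (Measure.pi ν) =ᵐ[Measure.pi μ] fun x => ∑ i, llr (μ i) (ν i) (x i) := by
  have hexp : ∀ᵐ x ∂Measure.pi μ, ∀ i,
      exp (llr (μ i) (ν i) (x i)) = ((μ i).rnDeriv (ν i) (x i)).toReal :=
    Filter.eventually_all.2 fun i =>
      Measure.tendsto_eval_ae_ae.eventually (exp_llr_of_ac (μ i) (ν i) (h i))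
  filter_upwards [(pi_absolutelyContinuous h).ae_le (rnDeriv_pi h), hexp] with x hx hexpx
  simp only [llr_def, hx] at hexpx ⊢
  rw [ENNReal.toReal_prod, ← Finset.prod_congr rfl fun i _ => hexpx i, ← exp_sum,
    log_exp]

theorem klDiv_pi : InformationTheory.klDiv (Measure.pi μ) (Measure.pi ν) =
    ∑ i, InformationTheory.klDiv (μ i) (ν i) := by
  by_cases hfin : ∀ i, InformationTheory.klDiv (μ i) (ν i) ≠ ⊤
  · have hac (i : ι) : μ i ≪ ν i := (InformationTheory.klDiv_ne_top_iff.1 (hfin i)).1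
    have hint (i : ι) : Integrable (fun x : ∀ i, E i => llr (μ i) (ν i) (x i)) (Measure.pi μ) :=
      integrable_comp_eval (InformationTheory.klDiv_ne_top_iff.1 (hfin i)).2
    have hac_pi := pi_absolutelyContinuous hac
    have hfin_pi : InformationTheory.klDiv (Measure.pi μ) (Measure.pi ν) ≠ ⊤ :=
      InformationTheory.klDiv_ne_top hac_pi
        ((integrable_congr (llr_pi hac)).2 (integrable_finsetSum _ fun i _ => hint i))
    rw [← ENNReal.toReal_eq_toReal_iff' hfin_pi (ENNReal.sum_ne_top.2 fun i _ => hfin i),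
      ENNReal.toReal_sum fun i _ => hfin i,
      InformationTheory.toReal_klDiv_of_measure_eq hac_pi (by simp),
      integral_congr_ae (llr_pi hac), integral_finsetSum _ fun i _ => hint i]
    refine Finset.sum_congr rfl fun i _ => ?_
    rw [integral_comp_eval (stronglyMeasurable_llr _ _).aestronglyMeasurable,
      InformationTheory.toReal_klDiv_of_measure_eq (hac i) (by simp)]
  · push Not at hfin
    obtain ⟨i, hi⟩ := hfin
    rw [ENNReal.sum_eq_top.2 ⟨i, Finset.mem_univ i, hi⟩, ← top_le_iff, ← hi,
      ← (measurePreserving_eval μ i).map_eq, ← (measurePreserving_eval ν i).map_eq]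
    exact InformationTheory.klDiv_map_le _ _ (measurable_pi_apply i)

end ProductMeasures

section Gaussian

open scoped NNReal

theorem gaussianReal_eq_withDensity_gaussianReal (m m₀ : ℝ) {v : ℝ≥0} (hv : v ≠ 0) :
    gaussianReal m v = (gaussianReal m₀ v).withDensity fun x =>
      ENNReal.ofReal (exp (((m - m₀) * x - (m ^ 2 - m₀ ^ 2) / 2) / v)) := by
  have hv' : (v : ℝ) ≠ 0 := by exact_mod_cast hv
  rw [gaussianReal_of_var_ne_zero _ hv, gaussianReal_of_var_ne_zero _ hv,
    ← withDensity_mul _ (measurable_gaussianPDF _ _) (by fun_prop)]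
  congr 1 with x
  rw [Pi.mul_apply, gaussianPDF, gaussianPDF, ← ENNReal.ofReal_mul (gaussianPDFReal_nonneg _ _ _),
    gaussianPDFReal, gaussianPDFReal, mul_assoc _ (exp _) (exp _), ← exp_add]
  congr 3
  field_simp
  ring

theorem gaussianReal_absolutelyContinuous_gaussianReal (m m₀ : ℝ) {v : ℝ≥0} (hv : v ≠ 0) :
    gaussianReal m v ≪ gaussianReal m₀ v := by
  rw [gaussianReal_eq_withDensity_gaussianReal m m₀ hv]
  exact withDensity_absolutelyContinuous _ _

theorem llr_gaussianReal (m m₀ : ℝ) {v : ℝ≥0} (hv : v ≠ 0) :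
    llr (gaussianReal m v) (gaussianReal m₀ v) =ᵐ[gaussianReal m v]
      fun x => ((m - m₀) * x - (m ^ 2 - m₀ ^ 2) / 2) / v := by
  have hrn : (gaussianReal m v).rnDeriv (gaussianReal m₀ v) =ᵐ[gaussianReal m₀ v] fun x =>
      ENNReal.ofReal (exp (((m - m₀) * x - (m ^ 2 - m₀ ^ 2) / 2) / v)) := by
    rw [gaussianReal_eq_withDensity_gaussianReal m m₀ hv]
    exact Measure.rnDeriv_withDensity _ (by fun_prop)
  filter_upwards [(gaussianReal_absolutelyContinuous_gaussianReal m m₀ hv).ae_le hrn] with x hx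
  rw [llr, hx, ENNReal.toReal_ofReal (exp_pos _).le, log_exp]

theorem klDiv_gaussianReal (m m₀ : ℝ) {v : ℝ≥0} (hv : v ≠ 0) :
    InformationTheory.klDiv (gaussianReal m v) (gaussianReal m₀ v) =
      ENNReal.ofReal ((m - m₀) ^ 2 / (2 * v)) := by
  have hv' : (v : ℝ) ≠ 0 := by exact_mod_cast hv
  have hid : Integrable (fun x : ℝ => (m - m₀) * x) (gaussianReal m v) :=
    ((memLp_id_gaussianReal 1).integrable le_rfl).const_mul _
  have hint : Integrable (fun x : ℝ => ((m - m₀) * x - (m ^ 2 - m₀ ^ 2) / 2) / v)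
      (gaussianReal m v) := (hid.sub (integrable_const _)).div_const _
  rw [InformationTheory.klDiv_of_ac_of_integrable
      (gaussianReal_absolutelyContinuous_gaussianReal m m₀ hv)
      ((integrable_congr (llr_gaussianReal m m₀ hv)).2 hint),
    integral_congr_ae (llr_gaussianReal m m₀ hv), integral_div,
    integral_sub hid (integrable_const _), integral_const_mul, integral_id_gaussianReal]
  congr 1
  simp only [integral_const, probReal_univ, one_smul]
  field_simp
  ring

theorem klDiv_pi_gaussianReal {ι : Type*} [Fintype ι] (m m₀ : ι → ℝ) {v : ℝ≥0} (hv : v ≠ 0) :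
    InformationTheory.klDiv (Measure.pi fun i => gaussianReal (m i) v)
      (Measure.pi fun i => gaussianReal (m₀ i) v) =
      ENNReal.ofReal ((∑ i, (m i - m₀ i) ^ 2) / (2 * v)) := by
  rw [klDiv_pi, Finset.sum_congr rfl fun i _ => klDiv_gaussianReal (m i) (m₀ i) hv,
    ← ENNReal.ofReal_sum_of_nonneg fun i _ => by positivity, Finset.sum_div]

theorem klDiv_pi_pi_gaussianReal {ι κ : Type*} [Fintype ι] [Fintype κ] (m m₀ : ι → κ → ℝ) {v : ℝ≥0}
    (hv : v ≠ 0) :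
    InformationTheory.klDiv (Measure.pi fun i => Measure.pi fun j => gaussianReal (m i j) v)
      (Measure.pi fun i => Measure.pi fun j => gaussianReal (m₀ i j) v) =
      ENNReal.ofReal ((∑ i, ∑ j, (m i j - m₀ i j) ^ 2) / (2 * v)) := by
  rw [klDiv_pi, Finset.sum_congr rfl fun i _ => klDiv_pi_gaussianReal (m i) (m₀ i) hv,
    ← ENNReal.ofReal_sum_of_nonneg fun i _ => by positivity, Finset.sum_div]

end Gaussian

theorem klDiv_eq_informationTheory_klDiv {Ω : Type*} [MeasurableSpace Ω] (Q P : Measure Ω)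
    [IsProbabilityMeasure Q] [IsProbabilityMeasure P] :
    klDiv Q P = InformationTheory.klDiv Q P := by
  rw [klDiv, InformationTheory.klDiv_def]
  simp

section PACBayes

variable {Θ : Type*} [MeasurableSpace Θ] {P : Measure Θ} [IsProbabilityMeasure P]

/-- The Donsker–Varadhan inequality: it is the nonnegativity of the divergence of `Q` from `P`
tilted by `f`. -/
theorem integral_le_toReal_klDiv_add_log_integral_exp {Q : Measure Θ} [IsProbabilityMeasure Q]
    {f : Θ → ℝ} (hQP : InformationTheory.klDiv Q P ≠ ⊤) (hfQ : Integrable f Q)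
    (hfP : Integrable (fun θ => exp (f θ)) P) :
    ∫ θ, f θ ∂Q ≤ (InformationTheory.klDiv Q P).toReal + log (∫ θ, exp (f θ) ∂P) := by
  obtain ⟨hac, hllr⟩ := InformationTheory.klDiv_ne_top_iff.1 hQP
  have : IsProbabilityMeasure (P.tilted f) := isProbabilityMeasure_tilted hfP
  have hkl : (InformationTheory.klDiv Q P).toReal = ∫ θ, llr Q P θ ∂Q :=
    InformationTheory.toReal_klDiv_of_measure_eq hac (by simp)
  have htilted : 0 ≤ ∫ θ, llr Q (P.tilted f) θ ∂Q := by
    rw [← InformationTheory.toReal_klDiv_of_measure_eq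
      (hac.trans (absolutelyContinuous_tilted hfP)) (by simp)]
    exact ENNReal.toReal_nonneg
  rw [integral_llr_tilted_right hac hfQ hfP hllr] at htilted
  linarith

theorem measure_compl_forall_integral_le_klDiv_le {Ω : Type*} [MeasurableSpace Ω]
    {μ : Measure Ω} [SFinite μ] {W : Ω → Θ → ℝ} (hW : Measurable fun p : Ω × Θ => W p.1 p.2)
    (hexp : ∀ θ, ∫⁻ ω, ENNReal.ofReal (exp (W ω θ)) ∂μ ≤ 1) {ε : ℝ} (hε : 0 < ε) :
    μ {ω | ∀ (Q : Measure Θ) [IsProbabilityMeasure Q], InformationTheory.klDiv Q P ≠ ⊤ →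
      Integrable (W ω) Q →
      ∫ θ, W ω θ ∂Q ≤ (InformationTheory.klDiv Q P).toReal + log (1 / ε)}ᶜ ≤
      ENNReal.ofReal ε := by
  have hmeas : Measurable fun p : Ω × Θ => ENNReal.ofReal (exp (W p.1 p.2)) := by fun_prop
  have hmean : ∫⁻ ω, ∫⁻ θ, ENNReal.ofReal (exp (W ω θ)) ∂P ∂μ ≤ 1 := by
    rw [lintegral_lintegral_swap hmeas.aemeasurable]
    exact (lintegral_mono hexp).trans_eq (by simp)
  have hmarkov : μ {ω | ENNReal.ofReal (1 / ε) ≤ ∫⁻ θ, ENNReal.ofReal (exp (W ω θ)) ∂P} ≤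
      ENNReal.ofReal ε := by
    refine (meas_ge_le_lintegral_div hmeas.lintegral_prod_right'.aemeasurable (by simpa)
      ENNReal.ofReal_ne_top).trans ((ENNReal.div_le_div_right hmean _).trans_eq ?_)
    rw [one_div, one_div, ← ENNReal.ofReal_inv_of_pos (inv_pos.2 hε), inv_inv]
  refine (measure_mono fun ω hω => ?_).trans hmarkov
  by_contra hlt
  rw [Set.mem_ofPred_eq, not_le] at hlt
  have hfP : Integrable (fun θ => exp (W ω θ)) P := by
    refine ⟨by fun_prop, ?_⟩
    rw [hasFiniteIntegral_iff_ofReal (ae_of_all _ fun θ => (exp_pos _).le)]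
    exact hlt.trans ENNReal.ofReal_lt_top
  refine hω fun Q _ hQP hfQ => (integral_le_toReal_klDiv_add_log_integral_exp hQP hfQ hfP).trans ?_
  rw [← ofReal_integral_eq_lintegral_ofReal hfP (ae_of_all _ fun θ => (exp_pos _).le)] at hlt
  have := integral_exp_pos hfP
  gcongr
  exact (ENNReal.ofReal_lt_ofReal_iff_of_nonneg this.le).1 hlt |>.le

end PACBayes

theorem lintegral_exp_sub_half_sq_sub_le_one {Z : Type*} [MeasurableSpace Z] {ρ : Measure Z}
    [IsProbabilityMeasure ρ] {X : Z → ℝ} (hX : MemLp X 2 ρ) :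
    ∫⁻ z, ENNReal.ofReal (exp (X z - X z ^ 2 / 2 - ∫ y, (X y + X y ^ 2 / 2) ∂ρ)) ∂ρ ≤ 1 := by
  have hint : Integrable (fun z => X z + X z ^ 2 / 2) ρ :=
    (hX.integrable one_le_two).add (hX.integrable_sq.div_const 2)
  set b := ∫ y, (X y + X y ^ 2 / 2) ∂ρ
  calc ∫⁻ z, ENNReal.ofReal (exp (X z - X z ^ 2 / 2 - b)) ∂ρ
      ≤ ∫⁻ z, ENNReal.ofReal (exp (-b) * (1 + (X z + X z ^ 2 / 2))) ∂ρ := by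
        refine lintegral_mono fun z => ENNReal.ofReal_le_ofReal ?_
        rw [sub_eq_neg_add _ b, exp_add, ← add_assoc]
        gcongr
        exact exp_sub_half_sq_le _
    _ = ENNReal.ofReal (exp (-b) * (1 + b)) := by
        have hnn (z : Z) : 0 ≤ exp (-b) * (1 + (X z + X z ^ 2 / 2)) :=
          mul_nonneg (exp_pos _).le (by nlinarith [sq_nonneg (X z + 1)])
        have hint' : Integrable (fun z => exp (-b) * (1 + (X z + X z ^ 2 / 2))) ρ :=
          ((integrable_const 1).add hint).const_mul _
        rw [← ofReal_integral_eq_lintegral_ofReal hint' (ae_of_all _ hnn),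
          integral_const_mul, integral_add (integrable_const 1) hint, integral_const,
          probReal_univ, one_smul]
    _ ≤ 1 := by
        refine ENNReal.ofReal_le_one.2 ?_
        calc exp (-b) * (1 + b) ≤ exp (-b) * exp b := by
              gcongr
              linarith [add_one_le_exp b]
          _ = 1 := by rw [← exp_add, neg_add_cancel, exp_zero]

theorem lintegral_pi_exp_sum_sub_half_sq_sub_le_one {ι : Type*} [Fintype ι] {Z : ι → Type*}
    [∀ i, MeasurableSpace (Z i)] {ρ : ∀ i, Measure (Z i)} [∀ i, IsProbabilityMeasure (ρ i)]
    {X : ∀ i, Z i → ℝ} (hX : ∀ i, Measurable (X i)) (hX2 : ∀ i, MemLp (X i) 2 (ρ i)) :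
    ∫⁻ ω, ENNReal.ofReal (exp (∑ i, (X i (ω i) - X i (ω i) ^ 2 / 2
      - ∫ y, (X i y + X i y ^ 2 / 2) ∂ρ i))) ∂Measure.pi ρ ≤ 1 := by
  simp only [exp_sum, ENNReal.ofReal_prod_of_nonneg fun _ _ => (exp_pos _).le]
  rw [lintegral_pi_prod_eq_prod_lintegral
    (f := fun i z => ENNReal.ofReal (exp (X i z - X i z ^ 2 / 2
      - ∫ y, (X i y + X i y ^ 2 / 2) ∂ρ i))) fun _ => by fun_prop]
  exact Finset.prod_le_one' fun i _ => lintegral_exp_sub_half_sq_sub_le_one (hX2 i)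

theorem integrable_of_abs_le {Ω : Type*} [MeasurableSpace Ω] {μ : Measure Ω} [IsFiniteMeasure μ]
    {f : Ω → ℝ} {C : ℝ} (hf : Measurable f) (hC : ∀ y, |f y| ≤ C) : Integrable f μ :=
  .of_bound hf.aestronglyMeasurable C (ae_of_all _ hC)

theorem integrable_sq_of_abs_le {Ω : Type*} [MeasurableSpace Ω] {μ : Measure Ω}
    [IsFiniteMeasure μ] {f : Ω → ℝ} {C : ℝ} (hf : Measurable f) (hC : ∀ y, |f y| ≤ C) :
    Integrable (fun y => f y ^ 2) μ :=
  (MemLp.of_bound hf.aestronglyMeasurable C (ae_of_all _ hC)).integrable_sq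

section CompensatedSum

variable {Z Θ ι : Type*} [MeasurableSpace Z] [Fintype ι]

/-- The sum over a sample `ω` of `x - x² / 2` minus the constant `∫ (x + x² / 2) ∂ρ`, as a function
of the parameter `θ`. The quadratic terms are chosen so that its exponential has mean at most one
when the sample is i.i.d. with law `ρ`. -/
noncomputable def compensatedSum (ρ : Measure Z) (x : Z → Θ → ℝ) (ω : ι → Z) (θ : Θ) : ℝ :=
  ∑ i, (x (ω i) θ - x (ω i) θ ^ 2 / 2 - ∫ z, (x z θ + x z θ ^ 2 / 2) ∂ρ)

variable {ρ : Measure Z} [IsProbabilityMeasure ρ]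

theorem lintegral_exp_compensatedSum_le_one {x : Z → Θ → ℝ} {θ : Θ}
    (hx : Measurable fun z => x z θ) (hx2 : MemLp (fun z => x z θ) 2 ρ) :
    ∫⁻ ω, ENNReal.ofReal (exp (compensatedSum ρ x ω θ)) ∂Measure.pi (fun _ : ι => ρ) ≤ 1 :=
  lintegral_pi_exp_sum_sub_half_sq_sub_le_one (fun _ => hx) fun _ => hx2

variable [MeasurableSpace Θ] {x : Z → Θ → ℝ} {C : ℝ}

theorem measurable_compensatedSum (hx : Measurable fun p : Z × Θ => x p.1 p.2) :
    Measurable fun p : (ι → Z) × Θ => compensatedSum ρ x p.1 p.2 := by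
  have hpair : Measurable fun p : Z × Θ => x p.1 p.2 + x p.1 p.2 ^ 2 / 2 := by fun_prop
  have hmean : Measurable fun θ => ∫ z, (x z θ + x z θ ^ 2 / 2) ∂ρ :=
    hpair.stronglyMeasurable.integral_prod_left'.measurable
  have hsample (i : ι) : Measurable fun p : (ι → Z) × Θ => x (p.1 i) p.2 :=
    hx.comp (by fun_prop : Measurable fun p : (ι → Z) × Θ => (p.1 i, p.2))
  exact Finset.measurable_sum _ fun i _ =>
    ((hsample i).sub (((hsample i).pow_const 2).div_const 2)).sub (hmean.comp measurable_snd)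

variable {Q : Measure Θ} [IsProbabilityMeasure Q]

theorem integrable_sub_half_sq (hx : Measurable fun p : Z × Θ => x p.1 p.2)
    (hC : ∀ z θ, |x z θ| ≤ C) (z : Z) : Integrable (fun θ => x z θ - x z θ ^ 2 / 2) Q :=
  (integrable_of_abs_le hx.of_uncurry_left (hC z)).sub
    ((integrable_sq_of_abs_le hx.of_uncurry_left (hC z)).div_const 2)

theorem integrable_add_half_sq_prod (hx : Measurable fun p : Z × Θ => x p.1 p.2)
    (hC : ∀ z θ, |x z θ| ≤ C) :
    Integrable (fun p : Z × Θ => x p.1 p.2 + x p.1 p.2 ^ 2 / 2) (ρ.prod Q) :=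
  (integrable_of_abs_le hx fun p => hC p.1 p.2).add
    ((integrable_sq_of_abs_le hx fun p => hC p.1 p.2).div_const 2)

theorem integrable_compensatedSum (hx : Measurable fun p : Z × Θ => x p.1 p.2)
    (hC : ∀ z θ, |x z θ| ≤ C) (ω : ι → Z) : Integrable (compensatedSum ρ x ω) Q :=
  integrable_finsetSum _ fun i _ =>
    (integrable_sub_half_sq hx hC (ω i)).sub (integrable_add_half_sq_prod hx hC).integral_prod_right

theorem integral_compensatedSum (hx : Measurable fun p : Z × Θ => x p.1 p.2)
    (hC : ∀ z θ, |x z θ| ≤ C) (ω : ι → Z) :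
    ∫ θ, compensatedSum ρ x ω θ ∂Q =
      ∑ i, (∫ θ, x (ω i) θ ∂Q - (∫ θ, x (ω i) θ ^ 2 ∂Q) / 2)
        - Fintype.card ι * (∫ z, ∫ θ, x z θ ∂Q ∂ρ + (∫ z, ∫ θ, x z θ ^ 2 ∂Q ∂ρ) / 2) := by
  have hsample (i : ι) := integrable_sub_half_sq (Q := Q) hx hC (ω i)
  have hprod := integrable_add_half_sq_prod (ρ := ρ) (Q := Q) hx hC
  have hcomp : Integrable (fun θ => ∫ z, (x z θ + x z θ ^ 2 / 2) ∂ρ) Q := hprod.integral_prod_right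
  have hmean : ∫ θ, ∫ z, (x z θ + x z θ ^ 2 / 2) ∂ρ ∂Q =
      ∫ z, ∫ θ, x z θ ∂Q ∂ρ + (∫ z, ∫ θ, x z θ ^ 2 ∂Q ∂ρ) / 2 := by
    rw [← integral_integral_swap hprod,
      integral_integral_add (integrable_of_abs_le hx fun p => hC p.1 p.2)
        ((integrable_sq_of_abs_le hx fun p => hC p.1 p.2).div_const 2)]
    simp only [integral_div]
  calc ∫ θ, compensatedSum ρ x ω θ ∂Q
      = ∑ i, (∫ θ, (x (ω i) θ - x (ω i) θ ^ 2 / 2) ∂Q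
          - ∫ θ, ∫ z, (x z θ + x z θ ^ 2 / 2) ∂ρ ∂Q) := by
        refine (integral_finsetSum _ fun i _ => (hsample i).sub hcomp).trans ?_
        exact Finset.sum_congr rfl fun i _ => integral_sub (hsample i) hcomp
    _ = _ := by
        rw [Finset.sum_sub_distrib, Finset.sum_const, Finset.card_univ, nsmul_eq_mul, hmean]
        congr 1
        refine Finset.sum_congr rfl fun i _ => ?_
        rw [integral_sub (integrable_of_abs_le hx.of_uncurry_left (hC _))
          ((integrable_sq_of_abs_le hx.of_uncurry_left (hC _)).div_const 2), integral_div]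

end CompensatedSum

section PACBayesBernstein

variable {Z Θ ι : Type*} [MeasurableSpace Z] [MeasurableSpace Θ] [Fintype ι]
  {ρ : Measure Z} [IsProbabilityMeasure ρ] {P : Measure Θ} [IsProbabilityMeasure P]
  {x : Z → Θ → ℝ} {C : ℝ} {ε : ℝ}

theorem measure_compl_forall_sum_sub_half_sq_le
    (hx : Measurable fun p : Z × Θ => x p.1 p.2) (hC : ∀ z θ, |x z θ| ≤ C) (hε : 0 < ε) :
    Measure.pi (fun _ : ι => ρ) {ω | ∀ (Q : Measure Θ) [IsProbabilityMeasure Q],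
      InformationTheory.klDiv Q P ≠ ⊤ →
      ∑ i, (∫ θ, x (ω i) θ ∂Q - (∫ θ, x (ω i) θ ^ 2 ∂Q) / 2) ≤
        Fintype.card ι * (∫ z, ∫ θ, x z θ ∂Q ∂ρ + (∫ z, ∫ θ, x z θ ^ 2 ∂Q ∂ρ) / 2)
          + ((InformationTheory.klDiv Q P).toReal + log (1 / ε))}ᶜ ≤ ENNReal.ofReal ε := by
  have hx_left (θ : Θ) : Measurable fun z => x z θ := hx.of_uncurry_right
  have hexp (θ : Θ) := lintegral_exp_compensatedSum_le_one (ι := ι) (hx_left θ)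
    (.of_bound (μ := ρ) (hx_left θ).aestronglyMeasurable C (ae_of_all _ fun z => hC z θ))
  refine (measure_mono (Set.compl_subset_compl.2 fun ω hω => ?_)).trans
    (measure_compl_forall_integral_le_klDiv_le (P := P) (measurable_compensatedSum hx) hexp hε)
  intro Q _ hQP
  have := hω Q hQP (integrable_compensatedSum hx hC ω)
  rw [integral_compensatedSum hx hC] at this
  linarith

theorem measure_compl_forall_abs_mean_sub_integral_le [Nonempty ι]
    (hx : Measurable fun p : Z × Θ => x p.1 p.2) (hC : ∀ z θ, |x z θ| ≤ C) (hε : 0 < ε)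
    {lam : ℝ} (hlam : 0 < lam) :
    Measure.pi (fun _ : ι => ρ) {ω | ∀ (Q : Measure Θ) [IsProbabilityMeasure Q],
      InformationTheory.klDiv Q P ≠ ⊤ →
      |(Fintype.card ι : ℝ)⁻¹ * ∑ i, ∫ θ, x (ω i) θ ∂Q - ∫ z, ∫ θ, x z θ ∂Q ∂ρ| ≤
        ((InformationTheory.klDiv Q P).toReal + log (1 / ε)) / (Fintype.card ι * lam)
        + lam / 2 * ((Fintype.card ι : ℝ)⁻¹ * ∑ i, ∫ θ, x (ω i) θ ^ 2 ∂Q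
          + ∫ z, ∫ θ, x z θ ^ 2 ∂Q ∂ρ)}ᶜ ≤ ENNReal.ofReal (2 * ε) := by
  have hbound (s : ℝ) (z : Z) (θ : Θ) : |s * x z θ| ≤ |s| * C := by
    rw [abs_mul]
    exact mul_le_mul_of_nonneg_left (hC z θ) (abs_nonneg s)
  have hone (s : ℝ) := measure_compl_forall_sum_sub_half_sq_le (ρ := ρ) (P := P) (ι := ι)
    (hx.const_mul s) (hbound s) hε
  have htwo := (measure_union_le _ _).trans (add_le_add (hone lam) (hone (-lam)))
  rw [← ENNReal.ofReal_add hε.le hε.le, ← two_mul, ← Set.compl_inter] at htwo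
  refine (measure_mono (Set.compl_subset_compl.2 fun ω hω => ?_)).trans htwo
  intro Q _ hQP
  have hcard : 0 < (Fintype.card ι : ℝ) := by exact_mod_cast Fintype.card_pos
  have hpos := hω.1 Q hQP
  have hneg := hω.2 Q hQP
  simp only [mul_pow, integral_const_mul, Finset.sum_sub_distrib, ← Finset.sum_div,
    ← Finset.mul_sum, neg_sq] at hpos hneg
  refine le_of_mul_le_mul_left ?_ (mul_pos hcard hlam)
  rw [← abs_of_pos (mul_pos hcard hlam), ← abs_mul, abs_of_pos (mul_pos hcard hlam), abs_le]
  constructor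
  · field_simp
    linarith
  · field_simp
    linarith

end PACBayesBernstein

section Policies

variable {X A Θ : Type*} [MeasurableSpace Θ] {n : ℕ}

/-- `π_Q(a | x)`, the probability that a hypothesis drawn from `Q` chooses action `a` in
context `x`. -/
noncomputable def inducedPolicy (Q : Measure Θ) (h : Θ → X → A) (x : X) (a : A) : ℝ :=
  Q.real {θ | h θ x = a}

/-- The uniform logging policy, `π₀(a | x) = 1 / K` for `K` actions. -/
noncomputable def uniformPolicy [Fintype A] (_ : X) (_ : A) : ℝ := (Fintype.card A : ℝ)⁻¹

/-- `R(p)`, the expected cost of the policy `p`. -/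
noncomputable def policyRisk [Fintype A] [MeasurableSpace X] (ν : Measure X) (c p : X → A → ℝ) :
    ℝ :=
  ∫ x, ∑ a, p x a * c x a ∂ν

/-- `R̂ₙ^α(p)`, the estimate of the risk of `p` from data logged by `p0`, with importance weights
`p / p0 ^ α`. -/
noncomputable def regularizedIPSRisk (c p0 : X → A → ℝ) (α : ℝ) (ω : Fin n → X × A)
    (p : X → A → ℝ) : ℝ :=
  (n : ℝ)⁻¹ * ∑ i, c (ω i).1 (ω i).2 * p (ω i).1 (ω i).2 / p0 (ω i).1 (ω i).2 ^ α

/-- `Bₙ^α(p)`, the term that accounts for the bias caused by the exponent `α`. -/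
noncomputable def regularizationBias [Fintype A] (p0 : X → A → ℝ) (α : ℝ) (ω : Fin n → X × A)
    (p : X → A → ℝ) : ℝ :=
  1 - (n : ℝ)⁻¹ * ∑ i, ∑ a, p (ω i).1 a * p0 (ω i).1 a ^ (1 - α)

/-- `V̄ₙ^α(p)`, the sum of two bounds on the second moment of the weighted costs: one averages over
actions drawn from `p0` and bounds the costs by one, the other uses the logged actions and costs. -/
noncomputable def secondMomentBound [Fintype A] (c p0 : X → A → ℝ) (α : ℝ) (ω : Fin n → X × A)
    (p : X → A → ℝ) : ℝ :=
  (n : ℝ)⁻¹ * ∑ i, ((∑ a, p0 (ω i).1 a * (p (ω i).1 a / p0 (ω i).1 a ^ (2 * α)))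
    + p (ω i).1 (ω i).2 * c (ω i).1 (ω i).2 ^ 2 / p0 (ω i).1 (ω i).2 ^ (2 * α))

/-- The PAC-Bayes upper bound on the risk of `π_Q`, minimised over posteriors `Q` to learn from the
data `ω`. -/
noncomputable def pacBayesObjective [Fintype A] (c p0 : X → A → ℝ) (P : Measure Θ)
    (h : Θ → X → A) (α lam δ : ℝ) (ω : Fin n → X × A) (Q : Measure Θ) : ℝ :=
  regularizedIPSRisk c p0 α ω (inducedPolicy Q h)
    + √(((InformationTheory.klDiv Q P).toReal + log (4 * √n / δ)) / (2 * n))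
    + regularizationBias p0 α ω (inducedPolicy Q h)
    + ((InformationTheory.klDiv Q P).toReal + log (4 / δ)) / (n * lam)
    + lam / 2 * secondMomentBound c p0 α ω (inducedPolicy Q h)

variable {h : Θ → X → A} {Q : Measure Θ}

theorem inducedPolicy_nonneg (x : X) (a : A) : 0 ≤ inducedPolicy Q h x a := measureReal_nonneg

theorem inducedPolicy_le_one [IsProbabilityMeasure Q] (x : X) (a : A) :
    inducedPolicy Q h x a ≤ 1 := measureReal_le_one

variable [MeasurableSpace A] [MeasurableSingletonClass A]

theorem integral_ite_eq_inducedPolicy_mul [DecidableEq A] (hh : ∀ x, Measurable fun θ => h θ x)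
    (x : X) (a : A) (b : ℝ) :
    ∫ θ, (if h θ x = a then b else 0) ∂Q = inducedPolicy Q h x a * b := by
  have hset : MeasurableSet {θ | h θ x = a} := hh x (measurableSet_singleton a)
  rw [← smul_eq_mul, inducedPolicy, ← integral_indicator_const b hset]
  simp only [Set.indicator_apply, Set.mem_ofPred_eq]

theorem sum_inducedPolicy [Fintype A] [IsProbabilityMeasure Q] (hh : ∀ x, Measurable fun θ => h θ x)
    (x : X) : ∑ a, inducedPolicy Q h x a = 1 := by
  have := Measure.isProbabilityMeasure_map (μ := Q) (hh x).aemeasurable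
  rw [← probReal_univ (μ := Q.map fun θ => h θ x), ← Finset.coe_univ, ← sum_measureReal_singleton]
  exact Finset.sum_congr rfl fun a _ =>
    (map_measureReal_apply (hh x) (measurableSet_singleton a)).symm

variable [MeasurableSpace X]

theorem measurable_inducedPolicy [Countable A] [SFinite Q]
    (hh : Measurable fun q : Θ × X => h q.1 q.2) :
    Measurable fun z : X × A => inducedPolicy Q h z.1 z.2 :=
  measurable_from_prod_countable_left fun a =>
    (measurable_measure_prodMk_right (hh (measurableSet_singleton a))).ennreal_toReal

theorem abs_policyRisk_le_one [Fintype A] [IsProbabilityMeasure Q] {ν : Measure X}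
    [IsProbabilityMeasure ν] {c : X → A → ℝ} (hh : ∀ x, Measurable fun θ => h θ x)
    (hc : ∀ x a, |c x a| ≤ 1) : |policyRisk ν c (inducedPolicy Q h)| ≤ 1 := by
  have hbound (x : X) : ‖∑ a, inducedPolicy Q h x a * c x a‖ ≤ 1 :=
    calc ‖∑ a, inducedPolicy Q h x a * c x a‖
        ≤ ∑ a, ‖inducedPolicy Q h x a * c x a‖ := norm_sum_le _ _
      _ ≤ ∑ a, inducedPolicy Q h x a := by
          gcongr with a
          rw [norm_mul, norm_eq_abs, norm_eq_abs, abs_of_nonneg (inducedPolicy_nonneg x a)]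
          exact mul_le_of_le_one_right (inducedPolicy_nonneg x a) (hc x a)
      _ = 1 := sum_inducedPolicy hh x
  simpa [policyRisk] using norm_integral_le_of_norm_le_const (μ := ν) (ae_of_all _ hbound)

theorem measure_compl_forall_abs_mean_inducedPolicy_mul_sub_integral_le [Countable A]
    {ρ : Measure (X × A)} [IsProbabilityMeasure ρ] {P : Measure Θ} [IsProbabilityMeasure P]
    (hh : Measurable fun q : Θ × X => h q.1 q.2) {f : X × A → ℝ} (hf : Measurable f) {C : ℝ}
    (hC : ∀ z, |f z| ≤ C) {lam ε : ℝ} (hn : n ≠ 0) (hlam : 0 < lam) (hε : 0 < ε) :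
    Measure.pi (fun _ : Fin n => ρ) {ω | ∀ (Q : Measure Θ) [IsProbabilityMeasure Q],
      InformationTheory.klDiv Q P ≠ ⊤ →
      |(n : ℝ)⁻¹ * ∑ i, inducedPolicy Q h (ω i).1 (ω i).2 * f (ω i)
          - ∫ z, inducedPolicy Q h z.1 z.2 * f z ∂ρ| ≤
        ((InformationTheory.klDiv Q P).toReal + log (1 / ε)) / (n * lam)
        + lam / 2 * ((n : ℝ)⁻¹ * ∑ i, inducedPolicy Q h (ω i).1 (ω i).2 * f (ω i) ^ 2
          + ∫ z, inducedPolicy Q h z.1 z.2 * f z ^ 2 ∂ρ)}ᶜ ≤ ENNReal.ofReal (2 * ε) := by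
  classical
  have : Nonempty (Fin n) := ⟨⟨0, Nat.pos_of_ne_zero hn⟩⟩
  have hloss : Measurable fun q : (X × A) × Θ => if h q.2 q.1.1 = q.1.2 then f q.1 else 0 := by
    refine Measurable.ite ?_ (by fun_prop) measurable_const
    exact measurableSet_eq_fun
      (hh.comp (by fun_prop : Measurable fun q : (X × A) × Θ => (q.2, q.1.1))) (by fun_prop)
  have hbound (z : X × A) (θ : Θ) : |if h θ z.1 = z.2 then f z else 0| ≤ C := by
    split_ifs
    · exact hC z
    · simpa using (abs_nonneg _).trans (hC z)
  have := measure_compl_forall_abs_mean_sub_integral_le (ι := Fin n) (ρ := ρ) (P := P)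
    hloss hbound hε hlam
  simpa only [ite_pow, zero_pow two_ne_zero, Fintype.card_fin,
    integral_ite_eq_inducedPolicy_mul (h := h) fun _ => hh.of_uncurry_right] using this

end Policies

section UniformLogging

theorem integral_compProd_uniformPolicy {X A : Type*} [MeasurableSpace X] [MeasurableSpace A]
    [MeasurableSingletonClass A] [Fintype A] {ν : Measure X} [SFinite ν] {κ : Kernel X A}
    [IsFiniteKernel κ]
    (hκ : ∀ x a, κ x {a} = ENNReal.ofReal (uniformPolicy x a)) {g : X × A → ℝ}
    (hg : Integrable g (ν ⊗ₘ κ)) :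
    ∫ z, g z ∂(ν ⊗ₘ κ) = (Fintype.card A : ℝ)⁻¹ * ∫ x, ∑ a, g (x, a) ∂ν := by
  have hsingleton (x : X) (a : A) : (κ x).real {a} = (Fintype.card A : ℝ)⁻¹ := by
    rw [measureReal_def, hκ, uniformPolicy, ENNReal.toReal_ofReal (by positivity)]
  rw [Measure.integral_compProd hg, ← integral_const_mul]
  refine integral_congr_ae (ae_of_all _ fun x => ?_)
  simp only [integral_fintype .of_finite, hsingleton, smul_eq_mul, Finset.mul_sum]

variable {X A Θ : Type*} [MeasurableSpace Θ] [Fintype A] {n : ℕ} {h : Θ → X → A} {Q : Measure Θ}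
  {c : X → A → ℝ} {α : ℝ}

theorem regularizedIPSRisk_uniformPolicy (ω : Fin n → X × A) (p : X → A → ℝ) :
    regularizedIPSRisk c uniformPolicy α ω p =
      (n : ℝ)⁻¹ * ∑ i, p (ω i).1 (ω i).2 * ((Fintype.card A : ℝ) ^ α * c (ω i).1 (ω i).2) := by
  simp only [regularizedIPSRisk, uniformPolicy, inv_rpow (Nat.cast_nonneg _), div_inv_eq_mul]
  congr! 2 with i
  ring

variable [MeasurableSpace A] [MeasurableSingletonClass A] [IsProbabilityMeasure Q]

theorem regularizationBias_uniformPolicy (hn : n ≠ 0) (hh : ∀ x, Measurable fun θ => h θ x)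
    (ω : Fin n → X × A) :
    regularizationBias uniformPolicy α ω (inducedPolicy Q h) =
      1 - (Fintype.card A : ℝ) ^ (α - 1) := by
  have hpow : (Fintype.card A : ℝ)⁻¹ ^ (1 - α) = (Fintype.card A : ℝ) ^ (α - 1) := by
    rw [inv_rpow (Nat.cast_nonneg _), ← rpow_neg (Nat.cast_nonneg _), neg_sub]
  have hn' : (n : ℝ) ≠ 0 := by exact_mod_cast hn
  simp [regularizationBias, uniformPolicy, ← Finset.sum_mul, sum_inducedPolicy hh, hpow, hn']

variable [Nonempty A]

theorem secondMomentBound_uniformPolicy (hn : n ≠ 0) (hh : ∀ x, Measurable fun θ => h θ x)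
    (ω : Fin n → X × A) :
    secondMomentBound c uniformPolicy α ω (inducedPolicy Q h) =
      (Fintype.card A : ℝ) ^ (2 * α - 1) + (n : ℝ)⁻¹ * ∑ i, inducedPolicy Q h (ω i).1 (ω i).2 *
        ((Fintype.card A : ℝ) ^ α * c (ω i).1 (ω i).2) ^ 2 := by
  have hcard : 0 < (Fintype.card A : ℝ) := by exact_mod_cast Fintype.card_pos
  have hn' : (n : ℝ) ≠ 0 := by exact_mod_cast hn
  have hsq : ((Fintype.card A : ℝ) ^ α) ^ 2 = (Fintype.card A : ℝ) ^ (2 * α) := by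
    rw [mul_comm, rpow_mul hcard.le, rpow_two]
  have hmean (x : X) : ∑ a, (Fintype.card A : ℝ)⁻¹ *
      (inducedPolicy Q h x a * (Fintype.card A : ℝ) ^ (2 * α)) =
      (Fintype.card A : ℝ) ^ (2 * α - 1) := by
    rw [← Finset.mul_sum, ← Finset.sum_mul, sum_inducedPolicy hh, one_mul,
      rpow_sub_one hcard.ne', inv_mul_eq_div]
  simp only [secondMomentBound, uniformPolicy, inv_rpow hcard.le, div_inv_eq_mul, hmean,
    Finset.sum_add_distrib, Finset.sum_const, Finset.card_univ, Fintype.card_fin, nsmul_eq_mul,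
    mul_add, mul_pow, hsq, inv_mul_cancel_left₀ hn']
  congr! 3 with i
  ring

theorem secondMomentBound_uniformPolicy_le (hn : n ≠ 0) (hh : ∀ x, Measurable fun θ => h θ x)
    (hc : ∀ x a, |c x a| ≤ 1) (ω : Fin n → X × A) :
    secondMomentBound c uniformPolicy α ω (inducedPolicy Q h) ≤
      (Fintype.card A : ℝ) ^ (2 * α - 1) + (Fintype.card A : ℝ) ^ (2 * α) := by
  have hterm (i : Fin n) : inducedPolicy Q h (ω i).1 (ω i).2 *
      ((Fintype.card A : ℝ) ^ α * c (ω i).1 (ω i).2) ^ 2 ≤ (Fintype.card A : ℝ) ^ (2 * α) := by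
    rw [mul_pow, ← rpow_mul_natCast (Nat.cast_nonneg _), mul_comm α, Nat.cast_two,
      mul_left_comm]
    refine mul_le_of_le_one_right (by positivity) (mul_le_one₀ (inducedPolicy_le_one _ _)
      (sq_nonneg _) ((sq_le_one_iff_abs_le_one _).2 (hc _ _)))
  rw [secondMomentBound_uniformPolicy hn hh]
  gcongr
  have hn' : 0 < (n : ℝ) := by exact_mod_cast Nat.pos_of_ne_zero hn
  rw [inv_mul_le_iff₀ hn']
  simpa using Finset.sum_le_card_nsmul Finset.univ _ _ fun i _ => hterm i

variable [MeasurableSpace X] {ν : Measure X} [IsProbabilityMeasure ν] {κ : Kernel X A}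
  [IsMarkovKernel κ]

theorem integral_inducedPolicy_mul_compProd_uniformPolicy
    (hh : Measurable fun q : Θ × X => h q.1 q.2)
    (hκ : ∀ x a, κ x {a} = ENNReal.ofReal (uniformPolicy x a))
    (hcmeas : Measurable fun z : X × A => c z.1 z.2) (hc : ∀ x a, |c x a| ≤ 1) :
    ∫ z, inducedPolicy Q h z.1 z.2 * ((Fintype.card A : ℝ) ^ α * c z.1 z.2) ∂(ν ⊗ₘ κ) =
      (Fintype.card A : ℝ) ^ (α - 1) * policyRisk ν c (inducedPolicy Q h) := by
  have hint : Integrable (fun z : X × A => inducedPolicy Q h z.1 z.2 * c z.1 z.2) (ν ⊗ₘ κ) :=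
    integrable_of_abs_le ((measurable_inducedPolicy hh).mul hcmeas) (C := 1) fun z => by
      rw [abs_mul, abs_of_nonneg (inducedPolicy_nonneg _ _)]
      exact mul_le_one₀ (inducedPolicy_le_one _ _) (abs_nonneg _) (hc _ _)
  simp only [mul_left_comm _ ((Fintype.card A : ℝ) ^ α)]
  rw [integral_const_mul, integral_compProd_uniformPolicy hκ hint, policyRisk,
    rpow_sub_one (by exact_mod_cast Fintype.card_ne_zero), div_eq_mul_inv, mul_assoc]

theorem integral_inducedPolicy_mul_sq_compProd_uniformPolicy_le
    (hh : Measurable fun q : Θ × X => h q.1 q.2)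
    (hκ : ∀ x a, κ x {a} = ENNReal.ofReal (uniformPolicy x a))
    (hc : ∀ x a, |c x a| ≤ 1) :
    ∫ z, inducedPolicy Q h z.1 z.2 * ((Fintype.card A : ℝ) ^ α * c z.1 z.2) ^ 2 ∂(ν ⊗ₘ κ) ≤
      (Fintype.card A : ℝ) ^ (2 * α - 1) := by
  have hint : Integrable (fun z : X × A => inducedPolicy Q h z.1 z.2) (ν ⊗ₘ κ) :=
    integrable_of_abs_le (measurable_inducedPolicy hh) fun z =>
      (abs_of_nonneg (inducedPolicy_nonneg _ _)).trans_le (inducedPolicy_le_one _ _)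
  have hmass : ∫ z, inducedPolicy Q h z.1 z.2 ∂(ν ⊗ₘ κ) = (Fintype.card A : ℝ)⁻¹ := by
    simp [integral_compProd_uniformPolicy hκ hint, sum_inducedPolicy fun _ => hh.of_uncurry_right]
  have hsq : ((Fintype.card A : ℝ) ^ α) ^ 2 * (Fintype.card A : ℝ)⁻¹ =
      (Fintype.card A : ℝ) ^ (2 * α - 1) := by
    rw [← rpow_mul_natCast (Nat.cast_nonneg _), Nat.cast_two, mul_comm α,
      rpow_sub_one (by exact_mod_cast Fintype.card_ne_zero), div_eq_mul_inv]
  rw [← hsq, ← hmass, ← integral_const_mul]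
  refine integral_mono_of_nonneg (ae_of_all _ fun z => mul_nonneg (inducedPolicy_nonneg _ _)
    (sq_nonneg _)) (hint.const_mul _) (ae_of_all _ fun z => ?_)
  beta_reduce
  rw [mul_pow, mul_comm (inducedPolicy Q h z.1 z.2), mul_assoc]
  gcongr
  exact mul_le_of_le_one_left (inducedPolicy_nonneg _ _)
    ((sq_le_one_iff_abs_le_one _).2 (hc _ _))

theorem measure_compl_forall_abs_regularizedIPSRisk_sub_policyRisk_le
    {P : Measure Θ} [IsProbabilityMeasure P] (hh : Measurable fun q : Θ × X => h q.1 q.2)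
    (hκ : ∀ x a, κ x {a} = ENNReal.ofReal (uniformPolicy x a))
    (hcmeas : Measurable fun z : X × A => c z.1 z.2) (hc : ∀ x a, |c x a| ≤ 1) (hα : α ≤ 1)
    (hn : n ≠ 0) {lam ε : ℝ} (hlam : 0 < lam) (hε : 0 < ε) :
    Measure.pi (fun _ : Fin n => ν ⊗ₘ κ) {ω | ∀ (Q : Measure Θ) [IsProbabilityMeasure Q],
      InformationTheory.klDiv Q P ≠ ⊤ →
      |regularizedIPSRisk c uniformPolicy α ω (inducedPolicy Q h)
          - policyRisk ν c (inducedPolicy Q h)| ≤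
        regularizationBias uniformPolicy α ω (inducedPolicy Q h)
        + ((InformationTheory.klDiv Q P).toReal + log (1 / ε)) / (n * lam)
        + lam / 2 * secondMomentBound c uniformPolicy α ω (inducedPolicy Q h)}ᶜ ≤
      ENNReal.ofReal (2 * ε) := by
  have hbound (z : X × A) : |(Fintype.card A : ℝ) ^ α * c z.1 z.2| ≤ (Fintype.card A : ℝ) ^ α := by
    rw [abs_mul, abs_of_nonneg (by positivity)]
    exact mul_le_of_le_one_right (by positivity) (hc _ _)
  refine (measure_mono (Set.compl_subset_compl.2 fun ω hω => ?_)).trans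
    (measure_compl_forall_abs_mean_inducedPolicy_mul_sub_integral_le (P := P) hh
      (hcmeas.const_mul _) hbound hn hlam hε)
  intro Q _ hQP
  have hh' (x : X) : Measurable fun θ => h θ x := hh.of_uncurry_right
  have hdev := hω Q hQP
  rw [← regularizedIPSRisk_uniformPolicy,
    integral_inducedPolicy_mul_compProd_uniformPolicy hh hκ hcmeas hc] at hdev
  rw [regularizationBias_uniformPolicy hn hh', secondMomentBound_uniformPolicy hn hh']
  have hsecond := mul_le_mul_of_nonneg_left (integral_inducedPolicy_mul_sq_compProd_uniformPolicy_le
    (α := α) (Q := Q) (ν := ν) hh hκ hc) (half_pos hlam).le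
  have hbias : |(Fintype.card A : ℝ) ^ (α - 1) * policyRisk ν c (inducedPolicy Q h)
      - policyRisk ν c (inducedPolicy Q h)| ≤ 1 - (Fintype.card A : ℝ) ^ (α - 1) := by
    have hpow : (Fintype.card A : ℝ) ^ (α - 1) ≤ 1 :=
      rpow_le_one_of_one_le_of_nonpos (by exact_mod_cast Fintype.card_pos) (by linarith)
    rw [← sub_one_mul, abs_mul, abs_sub_comm, abs_of_nonneg (sub_nonneg.2 hpow)]
    exact mul_le_of_le_one_right (sub_nonneg.2 hpow) (abs_policyRisk_le_one hh' hc)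
  linarith [abs_sub_le (regularizedIPSRisk c uniformPolicy α ω (inducedPolicy Q h))
    ((Fintype.card A : ℝ) ^ (α - 1) * policyRisk ν c (inducedPolicy Q h))
    (policyRisk ν c (inducedPolicy Q h))]

end UniformLogging

section OracleInequality

variable {X A Θ : Type*} [MeasurableSpace X] [MeasurableSpace Θ] [Fintype A] {n : ℕ}
  {h : Θ → X → A} {c p0 : X → A → ℝ} {P : Measure Θ} {α δ : ℝ}

theorem policyRisk_le_of_pacBayesObjective_le {ν : Measure X} {lam : ℝ} {ω : Fin n → X × A}
    {Q Qstar : Measure Θ}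
    (hobj : pacBayesObjective c p0 P h α lam δ ω Q ≤ pacBayesObjective c p0 P h α lam δ ω Qstar)
    (hQ : |regularizedIPSRisk c p0 α ω (inducedPolicy Q h) - policyRisk ν c (inducedPolicy Q h)| ≤
      regularizationBias p0 α ω (inducedPolicy Q h)
      + ((InformationTheory.klDiv Q P).toReal + log (4 / δ)) / (n * lam)
      + lam / 2 * secondMomentBound c p0 α ω (inducedPolicy Q h))
    (hQstar : |regularizedIPSRisk c p0 α ω (inducedPolicy Qstar h)
        - policyRisk ν c (inducedPolicy Qstar h)| ≤
      regularizationBias p0 α ω (inducedPolicy Qstar h)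
      + ((InformationTheory.klDiv Qstar P).toReal + log (4 / δ)) / (n * lam)
      + lam / 2 * secondMomentBound c p0 α ω (inducedPolicy Qstar h)) :
    policyRisk ν c (inducedPolicy Q h) ≤ policyRisk ν c (inducedPolicy Qstar h)
      + √(((InformationTheory.klDiv Qstar P).toReal + log (4 * √n / δ)) / (2 * n))
      + 2 * (regularizationBias p0 α ω (inducedPolicy Qstar h)
        + ((InformationTheory.klDiv Qstar P).toReal + log (4 / δ)) / (n * lam)
        + lam / 2 * secondMomentBound c p0 α ω (inducedPolicy Qstar h)) := by
  have hsqrt : 0 ≤ √(((InformationTheory.klDiv Q P).toReal + log (4 * √n / δ)) / (2 * n)) :=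
    sqrt_nonneg _
  simp only [pacBayesObjective] at hobj
  linarith [(abs_le.1 hQ).1, (abs_le.1 hQstar).2]

theorem sqrt_div_two_mul_le {x y : ℝ} (hy : 0 ≤ y) : √(x / (2 * y)) ≤ √(2 * x) / √y := by
  have hfour : x / (2 * y) = 2 * x / (2 ^ 2 * y) := by
    rw [pow_two, mul_assoc 2 2, mul_div_mul_left _ _ two_ne_zero]
  have hpos : 0 ≤ √(2 * x) / √y := by positivity
  rw [hfour, sqrt_div' _ (by positivity), sqrt_mul (sq_nonneg (2 : ℝ)),
    sqrt_sq zero_le_two, mul_comm 2 (√y), ← div_div]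
  exact half_le_self hpos

theorem ofReal_one_sub_le_of_measure_compl_le {Ω : Type*} [MeasurableSpace Ω] {μ : Measure Ω}
    [IsProbabilityMeasure μ] {s : Set Ω} {δ : ℝ} (hδ : 0 ≤ δ) (hs : μ sᶜ ≤ ENNReal.ofReal δ) :
    ENNReal.ofReal (1 - δ) ≤ μ s := by
  rw [ENNReal.ofReal_sub _ hδ, ENNReal.ofReal_one, tsub_le_iff_right]
  calc 1 = μ (s ∪ sᶜ) := by rw [Set.union_compl_self, measure_univ]
    _ ≤ μ s + μ sᶜ := measure_union_le _ _
    _ ≤ μ s + ENNReal.ofReal δ := by gcongr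

variable [MeasurableSpace A] [MeasurableSingletonClass A]

theorem oracle_inequality_gaussian_uniform_logging_general
    {ν : Measure X} [IsProbabilityMeasure ν] {κ : Kernel X A} [IsMarkovKernel κ]
    [IsProbabilityMeasure P]
    (hκ : ∀ x a, κ x {a} = ENNReal.ofReal (uniformPolicy x a))
    (hcmeas : Measurable fun z : X × A => c z.1 z.2) (hc : ∀ x a, |c x a| ≤ 1)
    (hh : Measurable fun q : Θ × X => h q.1 q.2) (hn : n ≠ 0) (hδ : 0 < δ) (hα : α ≤ 1)
    {Qhat : (Fin n → X × A) → Measure Θ} [∀ ω, IsProbabilityMeasure (Qhat ω)]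
    (hQhat : ∀ ω, InformationTheory.klDiv (Qhat ω) P ≠ ⊤)
    {Qstar : Measure Θ} [IsProbabilityMeasure Qstar]
    (hQstar : InformationTheory.klDiv Qstar P ≠ ⊤)
    (hobj : ∀ ω, pacBayesObjective c uniformPolicy P h α (√n)⁻¹ δ ω (Qhat ω) ≤
      pacBayesObjective c uniformPolicy P h α (√n)⁻¹ δ ω Qstar) :
    ENNReal.ofReal (1 - δ) ≤ Measure.pi (fun _ : Fin n => ν ⊗ₘ κ)
      {ω | policyRisk ν c (inducedPolicy (Qhat ω) h) ≤ policyRisk ν c (inducedPolicy Qstar h)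
        + √(2 * (InformationTheory.klDiv Qstar P).toReal + 2 * log (4 * √n / δ)) / √n
        + 2 * (1 - (Fintype.card A : ℝ) ^ (α - 1))
        + (2 * (InformationTheory.klDiv Qstar P).toReal + 2 * log (4 / δ)) / √n
        + ((Fintype.card A : ℝ) ^ (2 * α - 1) + (Fintype.card A : ℝ) ^ (2 * α)) / √n} := by
  have : Nonempty A := by
    obtain ⟨x⟩ := nonempty_of_isProbabilityMeasure ν
    obtain ⟨θ⟩ := nonempty_of_isProbabilityMeasure P
    exact ⟨h θ x⟩
  have hsqrt : 0 < √(n : ℝ) := sqrt_pos.2 (by exact_mod_cast Nat.pos_of_ne_zero hn)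
  have hh' (x : X) : Measurable fun θ => h θ x := hh.of_uncurry_right
  have hbad := measure_compl_forall_abs_regularizedIPSRisk_sub_policyRisk_le (ν := ν) (P := P)
    hh hκ hcmeas hc hα hn (inv_pos.2 hsqrt) (ε := δ / 4) (by positivity)
  rw [one_div_div] at hbad
  have hgood := hbad.trans (ENNReal.ofReal_le_ofReal (by linarith : 2 * (δ / 4) ≤ δ))
  refine (ofReal_one_sub_le_of_measure_compl_le hδ.le hgood).trans (measure_mono fun ω hω => ?_)
  refine (policyRisk_le_of_pacBayesObjective_le (hobj ω) (hω (Qhat ω) (hQhat ω))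
    (hω Qstar hQstar)).trans ?_
  rw [regularizationBias_uniformPolicy hn hh', ← div_eq_mul_inv, div_sqrt]
  have hroot := sqrt_div_two_mul_le (x := (InformationTheory.klDiv Qstar P).toReal
    + log (4 * √n / δ)) (Nat.cast_nonneg n)
  have hmoment : (√n)⁻¹ * secondMomentBound c uniformPolicy α ω (inducedPolicy Qstar h) ≤
      ((Fintype.card A : ℝ) ^ (2 * α - 1) + (Fintype.card A : ℝ) ^ (2 * α)) / √n := by
    rw [div_eq_inv_mul]
    gcongr
    exact secondMomentBound_uniformPolicy_le hn hh' hc ω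
  have hcomplexity : (2 * (InformationTheory.klDiv Qstar P).toReal + 2 * log (4 / δ)) / √n =
      2 * (((InformationTheory.klDiv Qstar P).toReal + log (4 / δ)) / √n) := by ring
  rw [mul_add] at hroot
  linarith

end OracleInequality

/-- **Oracle inequality for Gaussian linear policies under uniform logging.**  The prior is
`N(μ0, I_{dK})`, posteriors are `N(μ, I_{dK})` over linear argmax hypotheses
`h_θ(x) = argmax_a ⟪φ(x), θ_a⟫`, the logging policy is uniform and `λ = 1/√n`.  If `μhat`
minimizes the bound-based objective `F` and `μstar` minimizes the risk over the Gaussian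
family, then with probability at least `1 − δ` over the logged data, the risk of the learned
policy is within explicit terms of the optimal risk. -/
theorem oracle_inequality_gaussian_uniform_logging
    {X : Type*} [MeasurableSpace X] {d K : ℕ} (hK : 0 < K)
    (ν : Measure X) [IsProbabilityMeasure ν]
    (c : X → Fin K → ℝ)
    (hcmeas : ∀ a, Measurable fun x => c x a)
    (hc : ∀ x a, c x a ∈ Set.Icc (-1 : ℝ) 0)
    (φ : X → Fin d → ℝ) (hφ : Measurable φ)
    (p0 : X → Fin K → ℝ) (huniform : ∀ x a, p0 x a = (K : ℝ)⁻¹)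
    (κ0 : Kernel X (Fin K)) [IsMarkovKernel κ0]
    (hκ0 : ∀ x a, κ0 x {a} = ENNReal.ofReal (p0 x a))
    (ev : (Fin K → Fin d → ℝ) → X → Fin K)
    (hev : Measurable fun q : (Fin K → Fin d → ℝ) × X => ev q.1 q.2)
    (hargmax : ∀ (θ : Fin K → Fin d → ℝ) (x : X) (a : Fin K),
      ∑ j, φ x j * θ a j ≤ ∑ j, φ x j * θ (ev θ x) j)
    (G : (Fin K → Fin d → ℝ) → Measure (Fin K → Fin d → ℝ))
    (hG : ∀ μm : Fin K → Fin d → ℝ,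
      G μm = Measure.pi fun a => Measure.pi fun j => gaussianReal (μm a j) 1)
    (μ0 : Fin K → Fin d → ℝ)
    (n : ℕ) (hn : 1 ≤ n) (δ : ℝ) (hδ : δ ∈ Set.Ioo (0 : ℝ) 1)
    (α : ℝ) (hα : α ∈ Set.Icc (0 : ℝ) 1)
    (Rk : (Fin K → Fin d → ℝ) → ℝ)
    (hRk : ∀ μm : Fin K → Fin d → ℝ,
      Rk μm = ∫ x, ∑ a, ((G μm) {θ | ev θ x = a}).toReal * c x a ∂ν)
    (F : (Fin n → X × Fin K) → (Fin K → Fin d → ℝ) → ℝ)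
    (hF : ∀ (ω : Fin n → X × Fin K) (μm : Fin K → Fin d → ℝ), F ω μm =
      (n : ℝ)⁻¹ * (∑ i, c (ω i).1 (ω i).2 * ((G μm) {θ | ev θ (ω i).1 = (ω i).2}).toReal
          / p0 (ω i).1 (ω i).2 ^ α)
        + Real.sqrt (((klDiv (G μm) (G μ0)).toReal + Real.log (4 * Real.sqrt n / δ))
            / (2 * n))
        + (1 - (n : ℝ)⁻¹ * ∑ i, ∑ a,
            ((G μm) {θ | ev θ (ω i).1 = a}).toReal * p0 (ω i).1 a ^ (1 - α))
        + ((klDiv (G μm) (G μ0)).toReal + Real.log (4 / δ)) / (n * (Real.sqrt n)⁻¹)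
        + (Real.sqrt n)⁻¹ / 2 * ((n : ℝ)⁻¹ * ∑ i,
            ((∑ a, p0 (ω i).1 a *
                (((G μm) {θ | ev θ (ω i).1 = a}).toReal / p0 (ω i).1 a ^ (2 * α)))
              + ((G μm) {θ | ev θ (ω i).1 = (ω i).2}).toReal * c (ω i).1 (ω i).2 ^ 2
                  / p0 (ω i).1 (ω i).2 ^ (2 * α))))
    (μhat : (Fin n → X × Fin K) → Fin K → Fin d → ℝ)
    (hμhat : ∀ (ω : Fin n → X × Fin K) (μm : Fin K → Fin d → ℝ), F ω (μhat ω) ≤ F ω μm)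
    (μstar : Fin K → Fin d → ℝ)
    (hμstar : ∀ μm : Fin K → Fin d → ℝ, Rk μstar ≤ Rk μm)
    (N2 : ℝ) (hN2 : N2 = ∑ a, ∑ j, (μstar a j - μ0 a j) ^ 2)
 :
    ENNReal.ofReal (1 - δ) ≤
      (Measure.pi fun _ : Fin n => ν ⊗ₘ κ0)
        {ω | Rk (μhat ω) ≤ Rk μstar
          + Real.sqrt (N2 + 2 * Real.log (4 * Real.sqrt n / δ)) / Real.sqrt n
          + 2 * (1 - (K : ℝ) ^ (α - 1))
          + (N2 + 2 * Real.log (4 / δ)) / Real.sqrt n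
          + ((K : ℝ) ^ (2 * α - 1) + (K : ℝ) ^ (2 * α)) / Real.sqrt n} := by
  subst hN2
  obtain rfl : Rk = fun μm => policyRisk ν c (inducedPolicy (G μm) ev) := funext hRk
  obtain rfl : p0 = uniformPolicy := by
    ext x a
    rw [huniform, uniformPolicy, Fintype.card_fin]
  have hprob (μm : Fin K → Fin d → ℝ) : IsProbabilityMeasure (G μm) := hG μm ▸ inferInstance
  have hkl (μm : Fin K → Fin d → ℝ) : InformationTheory.klDiv (G μm) (G μ0) =
      ENNReal.ofReal ((∑ a, ∑ j, (μm a j - μ0 a j) ^ 2) / 2) := by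
    rw [hG, hG, klDiv_pi_pi_gaussianReal _ _ one_ne_zero, NNReal.coe_one, mul_one]
  have hobjective (ω : Fin n → X × Fin K) (μm : Fin K → Fin d → ℝ) :
      F ω μm = pacBayesObjective c uniformPolicy (G μ0) ev α (√n)⁻¹ δ ω (G μm) := by
    rw [hF, klDiv_eq_informationTheory_klDiv]
    rfl
  have hmain := oracle_inequality_gaussian_uniform_logging_general (ν := ν) (P := G μ0) hκ0
    (measurable_from_prod_countable_left hcmeas)
    (fun x a => abs_le.2 ⟨(hc x a).1, (hc x a).2.trans zero_le_one⟩) hev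
    (Nat.one_le_iff_ne_zero.1 hn) hδ.1 hα.2 (Qhat := fun ω => G (μhat ω)) (Qstar := G μstar)
    (fun ω => hkl _ ▸ ENNReal.ofReal_ne_top) (hkl _ ▸ ENNReal.ofReal_ne_top)
    fun ω => hobjective ω _ ▸ hobjective ω _ ▸ hμhat ω μstar
  rwa [hkl, ENNReal.toReal_ofReal (by positivity), mul_div_cancel₀ _ two_ne_zero,
    Fintype.card_fin] at hmain
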